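/- Let n ≥ 2 and G₀ = ℝⁿ \ {0}, whose boundary in the Möbius space S̄ⁿ = ℝⁿ ∪ {∞} is {0, ∞}, so that d̂_{G₀}(x) = min(q(x,0), 1/σ(x)) and ĵ_{G₀}(x,y) = log(1 + q(x,y)/min(d̂_{G₀}(x), d̂_{G₀}(y))), while j_{G₀}(x,y) = log(1 + |x−y|/min(|x|,|y|)). Then the constant 2 in the inequality j_{G₀} ≤ 2·ĵ_{G₀} is optimal: for every c < 2 there exist distinct x, y ∈ ℝⁿ \ {0} with j_{G₀}(x,y) > c·ĵ_{G₀}(x,y). (One may take x = e₁/r and y = r·e₁ for a sufficiently large r > 1, where e₁ is a unit vector.) -/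

import Mathlib

/-- `σ(x) = √(1 + |x|²)`. -/
noncomputable def sigmaFn {n : ℕ} (x : EuclideanSpace ℝ (Fin n)) : ℝ :=
  Real.sqrt (1 + ‖x‖ ^ 2)

/-- The chordal (spherical) distance between two finite points of the Möbius space
`S̄ⁿ = ℝⁿ ∪ {∞}`: `q(x,y) = |x−y|/(σ(x)σ(y))`. Recall `q(x,∞) = 1/σ(x)`. -/
noncomputable def chordal {n : ℕ} (x y : EuclideanSpace ℝ (Fin n)) : ℝ :=
  ‖x - y‖ / (sigmaFn x * sigmaFn y)

/-!
The inversion `x ↦ x*` in the unit sphere is a chordal isometry exchanging the two boundary points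
`0` and `∞` of `G₀`, so `x` and `x*` have the same chordal distance to the boundary. When
`‖x‖ > 1` that distance is `1 / σ(x)`, whereas the Euclidean distance from `x*` to `0` is only
`‖x‖⁻¹`. This gives `j(x*, x) = 2 log ‖x‖`, while
`ĵ(x*, x) = log (1 + (‖x‖² - 1) / σ(x))` lies between `log ‖x‖` and `log (1 + ‖x‖)` because
`‖x‖ ≤ σ(x) ≤ 1 + ‖x‖`. Hence `j(x*, x) / ĵ(x*, x) → 2` as `x → ∞`.
-/

open Filter Topology Bornology EuclideanGeometry

section UnitInversion

variable {E : Type*} [NormedAddCommGroup E] [InnerProductSpace ℝ E]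

lemma norm_inversion_zero_one (x : E) : ‖inversion 0 1 x‖ = ‖x‖⁻¹ := by
  simpa using dist_inversion_center 0 x 1

lemma norm_inversion_zero_one_sub_self {x : E} (hx : 1 ≤ ‖x‖) :
    ‖inversion 0 1 x - x‖ = ‖x‖ - ‖x‖⁻¹ := by
  have hx0 : 0 < ‖x‖ := one_pos.trans_le hx
  have hinv : inversion 0 1 x - x = (‖x‖⁻¹ ^ 2 - 1) • x := by
    simp [inversion, sub_smul]
  have hcoeff : ‖x‖⁻¹ ^ 2 - 1 ≤ 0 :=
    sub_nonpos.2 (pow_le_one₀ (by positivity) (inv_le_one_of_one_le₀ hx))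
  rw [hinv, norm_smul, Real.norm_of_nonpos hcoeff]
  field_simp [hx0.ne']
  ring

lemma inversion_zero_one_ne_self {x : E} (hx : 1 < ‖x‖) : inversion 0 1 x ≠ x := by
  intro h
  have hnorm : ‖x‖⁻¹ = ‖x‖ := by rw [← norm_inversion_zero_one, h]
  exact ((inv_lt_one_of_one_lt₀ hx).trans hx).ne hnorm

end UnitInversion

/-- The distance ratio metric `j` of `E \ {0}`. At the puncture itself the quotient has
denominator `0`, so the value there is `0`. -/
noncomputable def jDist {E : Type*} [NormedAddCommGroup E] (x y : E) : ℝ :=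
  Real.log (1 + ‖x - y‖ / min ‖x‖ ‖y‖)

lemma jDist_inversion_self {E : Type*} [NormedAddCommGroup E] [InnerProductSpace ℝ E] {x : E}
    (hx : 1 ≤ ‖x‖) : jDist (inversion 0 1 x) x = 2 * Real.log ‖x‖ := by
  have hx0 : 0 < ‖x‖ := one_pos.trans_le hx
  have hsq : 1 + (‖x‖ - ‖x‖⁻¹) / ‖x‖⁻¹ = ‖x‖ ^ 2 := by
    field_simp [hx0.ne']
    ring
  rw [jDist, norm_inversion_zero_one_sub_self hx, norm_inversion_zero_one,
    min_eq_left ((inv_le_one_of_one_le₀ hx).trans hx), hsq, Real.log_pow, Nat.cast_ofNat]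

section Chordal

variable {n : ℕ}

lemma sigmaFn_pos (x : EuclideanSpace ℝ (Fin n)) : 0 < sigmaFn x :=
  Real.sqrt_pos.2 (by positivity)

lemma sigmaFn_zero : sigmaFn (0 : EuclideanSpace ℝ (Fin n)) = 1 := by
  simp [sigmaFn]

lemma norm_le_sigmaFn (x : EuclideanSpace ℝ (Fin n)) : ‖x‖ ≤ sigmaFn x :=
  Real.le_sqrt_of_sq_le (by linarith)

lemma sigmaFn_inversion {x : EuclideanSpace ℝ (Fin n)} (hx : x ≠ 0) :
    sigmaFn (inversion 0 1 x) = sigmaFn x / ‖x‖ := by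
  have hx0 : 0 < ‖x‖ := norm_pos_iff.2 hx
  have hsq : 1 + ‖x‖⁻¹ ^ 2 = (1 + ‖x‖ ^ 2) / ‖x‖ ^ 2 := by
    field_simp
    ring
  rw [sigmaFn, sigmaFn, norm_inversion_zero_one, hsq, Real.sqrt_div' _ (by positivity),
    Real.sqrt_sq hx0.le]

lemma chordal_inversion_self {x : EuclideanSpace ℝ (Fin n)} (hx : 1 ≤ ‖x‖) :
    chordal (inversion 0 1 x) x = (‖x‖ ^ 2 - 1) / sigmaFn x ^ 2 := by
  have hx0 : 0 < ‖x‖ := one_pos.trans_le hx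
  have hσ := sigmaFn_pos x
  rw [chordal, norm_inversion_zero_one_sub_self hx, sigmaFn_inversion (norm_pos_iff.1 hx0)]
  field_simp

/-- The chordal distance `d̂` from a point to the boundary `{0, ∞}` of `ℝⁿ \ {0}` in the Möbius
space. The point `∞` is not represented, so `q(x, ∞)` is written out as `1 / σ(x)`. -/
noncomputable def chordalBoundaryDist (x : EuclideanSpace ℝ (Fin n)) : ℝ :=
  min (chordal x 0) (1 / sigmaFn x)

lemma chordalBoundaryDist_eq (x : EuclideanSpace ℝ (Fin n)) :
    chordalBoundaryDist x = min ‖x‖ 1 / sigmaFn x := by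
  rw [chordalBoundaryDist, chordal, sub_zero, sigmaFn_zero, mul_one,
    min_div_div_right (sigmaFn_pos x).le]

lemma chordalBoundaryDist_inversion {x : EuclideanSpace ℝ (Fin n)} (hx : x ≠ 0) :
    chordalBoundaryDist (inversion 0 1 x) = chordalBoundaryDist x := by
  have hx0 : 0 < ‖x‖ := norm_pos_iff.2 hx
  rw [chordalBoundaryDist_eq, chordalBoundaryDist_eq, norm_inversion_zero_one,
    sigmaFn_inversion hx, div_div_eq_mul_div, min_mul_of_nonneg _ _ hx0.le,
    inv_mul_cancel₀ hx0.ne', one_mul, min_comm]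

/-- The chordal distance ratio metric `ĵ` of `ℝⁿ \ {0}`: the analogue of `jDist` for the chordal
metric, with the boundary `{0, ∞}` taken in the Möbius space. -/
noncomputable def chordalJDist (x y : EuclideanSpace ℝ (Fin n)) : ℝ :=
  Real.log (1 + chordal x y / min (chordalBoundaryDist x) (chordalBoundaryDist y))

lemma chordalJDist_inversion_self {x : EuclideanSpace ℝ (Fin n)} (hx : 1 ≤ ‖x‖) :
    chordalJDist (inversion 0 1 x) x = Real.log (1 + (‖x‖ ^ 2 - 1) / sigmaFn x) := by
  have hx0 : x ≠ 0 := norm_pos_iff.1 (one_pos.trans_le hx)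
  have hσ := sigmaFn_pos x
  rw [chordalJDist, chordal_inversion_self hx, chordalBoundaryDist_inversion hx0, min_self,
    chordalBoundaryDist_eq, min_eq_right hx]
  field_simp

lemma log_norm_le_chordalJDist_inversion_self {x : EuclideanSpace ℝ (Fin n)} (hx : 1 ≤ ‖x‖) :
    Real.log ‖x‖ ≤ chordalJDist (inversion 0 1 x) x := by
  have hσ : sigmaFn x ≤ 1 + ‖x‖ := sqrt_one_add_norm_sq_le x
  have hquot : ‖x‖ - 1 ≤ (‖x‖ ^ 2 - 1) / sigmaFn x := by
    rw [le_div_iff₀ (sigmaFn_pos x)]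
    calc (‖x‖ - 1) * sigmaFn x
        ≤ (‖x‖ - 1) * (1 + ‖x‖) := mul_le_mul_of_nonneg_left hσ (sub_nonneg.2 hx)
      _ = ‖x‖ ^ 2 - 1 := by ring
  rw [chordalJDist_inversion_self hx]
  exact Real.log_le_log (one_pos.trans_le hx) (by linarith)

lemma chordalJDist_inversion_self_le {x : EuclideanSpace ℝ (Fin n)} (hx : 1 ≤ ‖x‖) :
    chordalJDist (inversion 0 1 x) x ≤ Real.log (1 + ‖x‖) := by
  have hnonneg : 0 ≤ (‖x‖ ^ 2 - 1) / sigmaFn x :=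
    div_nonneg (sub_nonneg.2 (one_le_pow₀ hx)) (sigmaFn_pos x).le
  have hquot : (‖x‖ ^ 2 - 1) / sigmaFn x ≤ ‖x‖ := by
    rw [div_le_iff₀ (sigmaFn_pos x)]
    calc ‖x‖ ^ 2 - 1 ≤ ‖x‖ * ‖x‖ := by linarith [sq ‖x‖]
      _ ≤ ‖x‖ * sigmaFn x := mul_le_mul_of_nonneg_left (norm_le_sigmaFn x) (norm_nonneg x)
  rw [chordalJDist_inversion_self hx]
  exact Real.log_le_log (by linarith) (by linarith)

end Chordal

lemma tendsto_log_one_add_div_log :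
    Tendsto (fun r : ℝ ↦ Real.log (1 + r) / Real.log r) atTop (𝓝 1) := by
  have hsplit : (fun r : ℝ ↦ 1 + (Real.log (r + 1) - Real.log r) / Real.log r)
      =ᶠ[atTop] fun r ↦ Real.log (1 + r) / Real.log r := by
    filter_upwards [eventually_gt_atTop 1] with r hr
    have hlog : Real.log r ≠ 0 := (Real.log_pos hr).ne'
    rw [sub_div, div_self hlog, add_sub_cancel, add_comm r]
  refine Tendsto.congr' hsplit ?_
  simpa using ((Real.tendsto_log_comp_add_sub_log 1).div_atTop Real.tendsto_log_atTop).const_add 1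

lemma tendsto_chordalJDist_inversion_self_div_log_norm (n : ℕ) :
    Tendsto (fun x : EuclideanSpace ℝ (Fin n) ↦
        chordalJDist (inversion 0 1 x) x / Real.log ‖x‖)
      (cobounded _) (𝓝 1) := by
  have hnorm := tendsto_norm_cobounded_atTop (E := EuclideanSpace ℝ (Fin n))
  refine tendsto_of_tendsto_of_tendsto_of_le_of_le' tendsto_const_nhds
    (tendsto_log_one_add_div_log.comp hnorm) ?_ ?_
  · filter_upwards [hnorm.eventually_gt_atTop 1] with x hx
    exact (one_le_div (Real.log_pos hx)).2 (log_norm_le_chordalJDist_inversion_self hx.le)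
  · filter_upwards [hnorm.eventually_gt_atTop 1] with x hx
    exact div_le_div_of_nonneg_right (chordalJDist_inversion_self_le hx.le) (Real.log_pos hx).le

lemma tendsto_jDist_div_chordalJDist_inversion_self (n : ℕ) :
    Tendsto (fun x : EuclideanSpace ℝ (Fin n) ↦
        jDist (inversion 0 1 x) x / chordalJDist (inversion 0 1 x) x)
      (cobounded _) (𝓝 2) := by
  have hlim := (tendsto_const_nhds (x := (2 : ℝ))).div
    (tendsto_chordalJDist_inversion_self_div_log_norm n) one_ne_zero
  rw [div_one] at hlim
  refine hlim.congr' ?_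
  filter_upwards [tendsto_norm_cobounded_atTop.eventually_gt_atTop 1] with x hx
  rw [jDist_inversion_self hx.le, Pi.div_apply, div_div_eq_mul_div]

theorem two_optimal_general (n : ℕ) {c : ℝ} (hc : c < 2) :
    ∀ᶠ x : EuclideanSpace ℝ (Fin n) in cobounded _,
      inversion 0 1 x ≠ 0 ∧ x ≠ 0 ∧ inversion 0 1 x ≠ x ∧
        c * chordalJDist (inversion 0 1 x) x < jDist (inversion 0 1 x) x := by
  filter_upwards [tendsto_norm_cobounded_atTop.eventually_gt_atTop 1,
    (tendsto_jDist_div_chordalJDist_inversion_self n).eventually_const_lt hc] with x hx hratio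
  have hx0 : x ≠ 0 := norm_pos_iff.1 (one_pos.trans hx)
  have hpos : 0 < chordalJDist (inversion 0 1 x) x :=
    (Real.log_pos hx).trans_le (log_norm_le_chordalJDist_inversion_self hx.le)
  exact ⟨(inversion_eq_center one_ne_zero).not.2 hx0, hx0, inversion_zero_one_ne_self hx,
    (lt_div_iff₀ hpos).1 hratio⟩

/-- For `G₀ = ℝⁿ \ {0}`, whose boundary in `S̄ⁿ` is `{0, ∞}`, the constant `2` in
`j_{G₀} ≤ 2·ĵ_{G₀}` is optimal: for every `c < 2` there are distinct
`x, y ∈ ℝⁿ \ {0}` with `j_{G₀}(x,y) > c·ĵ_{G₀}(x,y)`. -/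
theorem two_optimal {n : ℕ} (hn : 2 ≤ n) (c : ℝ) (hc : c < 2) :
    ∃ x y : EuclideanSpace ℝ (Fin n), x ≠ 0 ∧ y ≠ 0 ∧ x ≠ y ∧
      Real.log (1 + ‖x - y‖ / min ‖x‖ ‖y‖) >
        c * Real.log (1 + chordal x y /
          min (min (chordal x 0) (1 / sigmaFn x))
              (min (chordal y 0) (1 / sigmaFn y))) := by
  have : Nonempty (Fin n) := Fin.pos_iff_nonempty.1 (two_pos.trans_le hn)
  have := NormedSpace.cobounded_neBot ℝ (EuclideanSpace ℝ (Fin n))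
  obtain ⟨x, hx⟩ := (two_optimal_general n hc).exists
  exact ⟨inversion 0 1 x, x, hx⟩
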